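/- Fix h ∈ 𝔥 with h ≠ 0 and ⟨h,h⟩ = 0. Let 𝔥' and 𝔥'' be regular subspaces of 𝔥 and set h' = P_{𝔥'}(h), h'' = P_{𝔥''}(h). Then there exists σ ∈ O(𝔥) with σ(h) = h, σ(𝔥') = 𝔥'', and σ(h') = h'' if and only if all of the following hold: dim 𝔥' = dim 𝔥'', ⟨h',h'⟩ = ⟨h'',h''⟩, (h' = h if and only if h'' = h), and (h' = 0 if and only if h'' = 0). In other words, the O(𝔥)_h-orbits on Reg(𝔥)_h are exactly the fibers of the invariant (dim 𝔥', ⟨h',h'⟩, [h' = h], [h' = 0]). -/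

import Mathlib

/-- A subspace `W` is regular if the restriction of the bilinear form `B` to `W`
is nondegenerate. -/
def IsRegularSubspace {V : Type*} [AddCommGroup V] [Module ℂ V]
    (B : LinearMap.BilinForm ℂ V) (W : Submodule ℂ V) : Prop :=
  ∀ x ∈ W, (∀ y ∈ W, B x y = 0) → x = 0

/-- `IsOrthProj B W x y` : `y` is the orthogonal projection `P_W(x)` of `x` onto `W`. -/
def IsOrthProj {V : Type*} [AddCommGroup V] [Module ℂ V]
    (B : LinearMap.BilinForm ℂ V) (W : Submodule ℂ V) (x y : V) : Prop :=
  y ∈ W ∧ ∀ w ∈ W, B (x - y) w = 0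

/-!
Two vectors of equal norm in a nondegenerate space, both zero or both nonzero, are exchanged by a
product of reflections in vectors of that space: one reflection in `x - y` when `x - y` is
anisotropic, two otherwise, passing through `-y` or through an isotropic vector that is orthogonal
to neither `x` nor `y`. Such a product fixes the orthogonal complement pointwise, so it can be
applied inside a regular subspace or inside its complement without disturbing the other summand.

Moving an orthogonal basis vector by vector shows that an isometry `W ≃ W'` extends to the whole
space. Correct it inside `W` so that it maps `h'` to `h''`, then inside `Wᗮ` so that it maps
`h - h'` to `h - h''`; both corrections are possible because
`B h h = B h' h' + B (h - h') (h - h')`.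
-/

open LinearMap (BilinForm)
open LinearMap.BilinForm

theorem exists_mem_apply_ne_zero_and_apply_ne_zero {R M N P : Type*} [Semiring R]
    [AddCommMonoid M] [AddCommMonoid N] [AddCommMonoid P] [Module R M] [Module R N] [Module R P]
    (S : Submodule R M) (f : M →ₗ[R] N) (g : M →ₗ[R] P)
    (hf : ∃ a ∈ S, f a ≠ 0) (hg : ∃ b ∈ S, g b ≠ 0) : ∃ w ∈ S, f w ≠ 0 ∧ g w ≠ 0 := by
  obtain ⟨a, haS, hfa⟩ := hf
  obtain ⟨b, hbS, hgb⟩ := hg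
  by_cases hga : g a = 0
  · by_cases hfb : f b = 0
    · exact ⟨a + b, S.add_mem haS hbS, by simpa [hfb] using hfa, by simpa [hga] using hgb⟩
    · exact ⟨b, hbS, hfb, hgb⟩
  · exact ⟨a, haS, hfa, hga⟩

section CommRing

variable {R M : Type*} [CommRing R] [AddCommGroup M] [Module R M] {B : BilinForm R M}

theorem isOrthogonal_trans {σ τ : M ≃ₗ[R] M} (hσ : B.IsOrthogonal σ) (hτ : B.IsOrthogonal τ) :
    B.IsOrthogonal (σ.trans τ) :=
  fun x y ↦ (hτ (σ x) (σ y)).trans (hσ x y)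

theorem apply_self_eq_add_apply_sub_self (hB : B.IsSymm) {x y : M} (hxy : B x (y - x) = 0) :
    B y y = B x x + B (y - x) (y - x) := by
  simp only [map_sub, LinearMap.sub_apply, hB.eq y x] at hxy ⊢
  linear_combination 2 * hxy

theorem exists_mem_apply_ne_zero_of_disjoint_orthogonal {S : Submodule R M}
    (hS : Disjoint S (B.orthogonal S)) {x : M} (hxS : x ∈ S) (hx : x ≠ 0) :
    ∃ w ∈ S, B w x ≠ 0 := by
  by_contra! h
  exact hx (Submodule.disjoint_def.mp hS x hxS h)

theorem disjoint_orthogonal_orthogonal_of_codisjoint (hB : B.SeparatingRight)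
    {W : Submodule R M} (hW : Codisjoint W (B.orthogonal W)) :
    Disjoint (B.orthogonal W) (B.orthogonal (B.orthogonal W)) := by
  rw [Submodule.disjoint_def]
  intro x hxW hxWW
  refine hB x fun v ↦ ?_
  obtain ⟨a, b, ha, hb, rfl⟩ := Submodule.codisjoint_iff_exists_add_eq.mp hW v
  rw [map_add, LinearMap.add_apply, hxW a ha, hxWW b hb, add_zero]

theorem equivalent_of_equivalent_toQuadraticMap [Invertible (2 : R)]
    {N : Type*} [AddCommGroup N] [Module R N] {C : BilinForm R N} (hB : B.IsSymm) (hC : C.IsSymm)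
    (h : B.toQuadraticMap.Equivalent C.toQuadraticMap) : B.Equivalent C := by
  obtain ⟨f⟩ := h
  have hcomp : C.toQuadraticMap.comp f.toLinearEquiv = B.toQuadraticMap :=
    QuadraticMap.ext f.map_app
  have hassoc := QuadraticMap.associated_comp R C.toQuadraticMap (f.toLinearEquiv : M →ₗ[R] N)
  rw [hcomp, QuadraticMap.associated_left_inverse R hB.eq,
    QuadraticMap.associated_left_inverse R hC.eq] at hassoc
  exact ⟨{ f.toLinearEquiv with map_app' := fun x y ↦ (LinearMap.congr_fun₂ hassoc x y).symm }⟩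

end CommRing

section Field

variable {K V : Type*} [Field K] [AddCommGroup V] [Module K V] {B : BilinForm K V}

theorem exists_isOrthogonal_apply_eq_of_sub_anisotropic (hB : B.IsSymm) {x y : V}
    (hxy : B x x = B y y) (hsub : B (x - y) (x - y) ≠ 0) :
    ∃ σ : V ≃ₗ[K] V, B.IsOrthogonal σ ∧ σ x = y ∧ ∀ z, B (x - y) z = 0 → σ z = z := by
  have hrefl : B.IsReflective (x - y) := ⟨.of_ne_zero hsub, fun _ ↦ hsub.isUnit.dvd⟩
  have hcoroot (z : V) : B (x - y) (x - y) * hrefl.coroot B z = 2 * B (x - y) z :=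
    hrefl.apply_self_mul_coroot_apply B
  refine ⟨Module.reflection (hrefl.coroot_apply_self B),
    hrefl.isOrthogonal_reflection B (isSymm_iff.mp hB), ?_, fun z hz ↦ ?_⟩
  · have hx : hrefl.coroot B x = 1 := by
      refine mul_left_cancel₀ hsub ((hcoroot x).trans ?_)
      simp only [map_sub, LinearMap.sub_apply, hB.eq y x]
      linear_combination hxy
    simp [Module.reflection_apply, hx]
  · have hz' : hrefl.coroot B z = 0 :=
      (mul_eq_zero_iff_left hsub).mp <| (hcoroot z).trans <| by rw [hz, mul_zero]
    simp [Module.reflection_apply, hz']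

theorem exists_isOrthogonal_apply_eq_of_anisotropic [NeZero (2 : K)] (hB : B.IsSymm) {x y : V}
    (hxy : B x x = B y y) (hx : B x x ≠ 0) :
    ∃ σ : V ≃ₗ[K] V, B.IsOrthogonal σ ∧ σ x = y ∧ ∀ z, B x z = 0 → B y z = 0 → σ z = z := by
  by_cases hsub : B (x - y) (x - y) = 0
  · have hadd : B (x - -y) (x - -y) ≠ 0 := by
      intro hadd
      simp only [map_sub, map_neg, LinearMap.sub_apply, LinearMap.neg_apply] at hsub hadd
      refine mul_ne_zero (mul_ne_zero two_ne_zero two_ne_zero) hx ?_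
      linear_combination hsub + hadd + 2 * hxy
    have htwo : B (-y - y) (-y - y) ≠ 0 := by
      have hfour : B (-y - y) (-y - y) = 2 * 2 * B y y := by
        simp only [map_sub, map_neg, LinearMap.sub_apply, LinearMap.neg_apply]
        ring
      rw [hfour, ← hxy]
      exact mul_ne_zero (mul_ne_zero two_ne_zero two_ne_zero) hx
    obtain ⟨σ, hσ, hσx, hσfix⟩ :=
      exists_isOrthogonal_apply_eq_of_sub_anisotropic hB (by simpa using hxy) hadd
    obtain ⟨τ, hτ, hτy, hτfix⟩ :=
      exists_isOrthogonal_apply_eq_of_sub_anisotropic hB (by simp) htwo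
    refine ⟨σ.trans τ, isOrthogonal_trans hσ hτ, by simp [hσx, hτy], fun z hxz hyz ↦ ?_⟩
    rw [LinearEquiv.trans_apply, hσfix z (by simp [hxz, hyz]), hτfix z (by simp [hyz])]
  · obtain ⟨σ, hσ, hσx, hσfix⟩ := exists_isOrthogonal_apply_eq_of_sub_anisotropic hB hxy hsub
    exact ⟨σ, hσ, hσx, fun z hxz hyz ↦ hσfix z (by simp [hxz, hyz])⟩

theorem exists_isOrthogonal_apply_eq_of_isotropic_of_apply_ne_zero [NeZero (2 : K)]
    (hB : B.IsSymm) {x y : V} (hx : B x x = 0) (hy : B y y = 0) (hxy : B x y ≠ 0) :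
    ∃ σ : V ≃ₗ[K] V, B.IsOrthogonal σ ∧ σ x = y ∧ ∀ z, B (x - y) z = 0 → σ z = z := by
  refine exists_isOrthogonal_apply_eq_of_sub_anisotropic hB (hx.trans hy.symm) ?_
  have hsub : B (x - y) (x - y) = -(2 * B x y) := by
    simp only [map_sub, LinearMap.sub_apply, hx, hy, hB.eq y x]
    ring
  rw [hsub]
  exact neg_ne_zero.mpr (mul_ne_zero two_ne_zero hxy)

theorem exists_isotropic_apply_ne_zero_and_apply_ne_zero [NeZero (2 : K)] (hB : B.IsSymm)
    {S : Submodule K V} (hS : Disjoint S (B.orthogonal S)) {x y : V} (hxS : x ∈ S) (hyS : y ∈ S)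
    (hx0 : x ≠ 0) (hy0 : y ≠ 0) (hx : B x x = 0) (hxy : B x y = 0) :
    ∃ u ∈ S, B u u = 0 ∧ B u x ≠ 0 ∧ B u y ≠ 0 := by
  obtain ⟨w, hwS, hwx, hwy⟩ := exists_mem_apply_ne_zero_and_apply_ne_zero S (B.flip x) (B.flip y)
    (exists_mem_apply_ne_zero_of_disjoint_orthogonal hS hxS hx0)
    (exists_mem_apply_ne_zero_of_disjoint_orthogonal hS hyS hy0)
  rw [LinearMap.BilinForm.flip_apply] at hwx hwy
  obtain ⟨c, hc⟩ : ∃ c, c * (2 * B w x) = B w w :=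
    ⟨B w w / (2 * B w x), div_mul_cancel₀ _ (mul_ne_zero two_ne_zero hwx)⟩
  refine ⟨w - c • x, S.sub_mem hwS (S.smul_mem c hxS), ?_, by simpa [hx], by simpa [hxy]⟩
  simp only [map_sub, map_smul, LinearMap.sub_apply, LinearMap.smul_apply, smul_eq_mul, hx,
    hB.eq x w]
  linear_combination -hc

theorem exists_isOrthogonal_apply_eq_of_isotropic [NeZero (2 : K)] (hB : B.IsSymm)
    {S : Submodule K V} (hS : Disjoint S (B.orthogonal S)) {x y : V} (hxS : x ∈ S) (hyS : y ∈ S)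
    (hx0 : x ≠ 0) (hy0 : y ≠ 0) (hx : B x x = 0) (hy : B y y = 0) :
    ∃ σ : V ≃ₗ[K] V, B.IsOrthogonal σ ∧ σ x = y ∧ ∀ z ∈ B.orthogonal S, σ z = z := by
  by_cases hxy : B x y = 0
  · obtain ⟨u, huS, hu, hux, huy⟩ :=
      exists_isotropic_apply_ne_zero_and_apply_ne_zero hB hS hxS hyS hx0 hy0 hx hxy
    obtain ⟨σ, hσ, hσx, hσfix⟩ := exists_isOrthogonal_apply_eq_of_isotropic_of_apply_ne_zero hB
      hx hu (by rwa [hB.eq])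
    obtain ⟨τ, hτ, hτu, hτfix⟩ :=
      exists_isOrthogonal_apply_eq_of_isotropic_of_apply_ne_zero hB hu hy huy
    refine ⟨σ.trans τ, isOrthogonal_trans hσ hτ, by simp [hσx, hτu], fun z hz ↦ ?_⟩
    rw [LinearEquiv.trans_apply, hσfix z (hz _ (S.sub_mem hxS huS)),
      hτfix z (hz _ (S.sub_mem huS hyS))]
  · obtain ⟨σ, hσ, hσx, hσfix⟩ :=
      exists_isOrthogonal_apply_eq_of_isotropic_of_apply_ne_zero hB hx hy hxy
    exact ⟨σ, hσ, hσx, fun z hz ↦ hσfix z (hz _ (S.sub_mem hxS hyS))⟩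

theorem exists_isOrthogonal_apply_eq_of_mem [NeZero (2 : K)] (hB : B.IsSymm)
    {S : Submodule K V} (hS : Disjoint S (B.orthogonal S)) {x y : V} (hxS : x ∈ S) (hyS : y ∈ S)
    (hxy : B x x = B y y) (h0 : x = 0 ↔ y = 0) :
    ∃ σ : V ≃ₗ[K] V, B.IsOrthogonal σ ∧ σ x = y ∧ ∀ z ∈ B.orthogonal S, σ z = z := by
  by_cases hx : B x x = 0
  · by_cases hx0 : x = 0
    · exact ⟨.refl K V, fun _ _ ↦ rfl, by simp [hx0, h0.mp hx0], fun _ _ ↦ rfl⟩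
    · exact exists_isOrthogonal_apply_eq_of_isotropic hB hS hxS hyS hx0 (mt h0.mpr hx0) hx
        (hxy ▸ hx)
  · obtain ⟨σ, hσ, hσx, hσfix⟩ := exists_isOrthogonal_apply_eq_of_anisotropic hB hxy hx
    exact ⟨σ, hσ, hσx, fun z hz ↦ hσfix z (hz x hxS) (hz y hyS)⟩

theorem exists_isOrthogonal_apply_eq_of_iIsOrtho [NeZero (2 : K)] {ι : Type*} [Finite ι]
    (hB : B.IsSymm) {v w : ι → V} (hv : B.iIsOrtho v) (hw : B.iIsOrtho w)
    (hvw : ∀ i, B (v i) (v i) = B (w i) (w i)) (hv0 : ∀ i, B (v i) (v i) ≠ 0) :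
    ∃ σ : V ≃ₗ[K] V, B.IsOrthogonal σ ∧ ∀ i, σ (v i) = w i := by
  classical
  suffices h : ∀ s : Set ι, s.Finite →
      ∃ σ : V ≃ₗ[K] V, B.IsOrthogonal σ ∧ ∀ i ∈ s, σ (v i) = w i by
    simpa using h Set.univ Set.finite_univ
  intro s hs
  induction s, hs using Set.Finite.induction_on with
  | empty => exact ⟨.refl K V, fun _ _ ↦ rfl, by simp⟩
  | @insert i s his _ ih =>
    obtain ⟨σ, hσ, hσs⟩ := ih
    obtain ⟨τ, hτ, hτi, hτfix⟩ := exists_isOrthogonal_apply_eq_of_anisotropic hB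
      ((hσ (v i) (v i)).trans (hvw i)) ((hσ (v i) (v i)).trans_ne (hv0 i))
    refine ⟨σ.trans τ, isOrthogonal_trans hσ hτ, fun j hj ↦ ?_⟩
    obtain rfl | hjs := Set.mem_insert_iff.mp hj
    · exact hτi
    have hij : i ≠ j := fun h ↦ his (h ▸ hjs)
    have hσij : B (σ (v i)) (w j) = 0 := by rw [← hσs j hjs, hσ]; exact hv hij
    rw [LinearEquiv.trans_apply, hσs j hjs, hτfix (w j) hσij (hw hij)]

/-- **Witt's extension theorem** for nondegenerate subspaces. -/
theorem exists_isOrthogonal_extending [NeZero (2 : K)] (hB : B.IsSymm) {W : Submodule K V}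
    [FiniteDimensional K W] (hW : (B.restrict W).Nondegenerate) (f : W →ₗ[K] V)
    (hf : ∀ x y : W, B (f x) (f y) = B x y) :
    ∃ σ : V ≃ₗ[K] V, B.IsOrthogonal σ ∧ ∀ x : W, σ x = f x := by
  let _ : Invertible (2 : K) := invertibleOfNonzero two_ne_zero
  obtain ⟨b, hb⟩ := exists_orthogonal_basis (isSymm_iff.mp (hB.restrict W))
  obtain ⟨σ, hσ, hσb⟩ := exists_isOrthogonal_apply_eq_of_iIsOrtho hB
    (v := fun i ↦ (b i : V)) (w := fun i ↦ f (b i)) hb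
    (fun i j hij ↦ (hf (b i) (b j)).trans (hb hij)) (fun i ↦ (hf (b i) (b i)).symm)
    (iIsOrtho.not_isOrtho_basis_self_of_nondegenerate hb hW)
  have hσf : σ.toLinearMap ∘ₗ W.subtype = f := b.ext hσb
  exact ⟨σ, hσ, LinearMap.congr_fun hσf⟩

theorem exists_isOrthogonal_map_eq [NeZero (2 : K)] (hB : B.IsSymm)
    {W W' : Submodule K V} [FiniteDimensional K W] (hW : (B.restrict W).Nondegenerate)
    (e : (B.restrict W).IsometryEquiv (B.restrict W')) :
    ∃ σ : V ≃ₗ[K] V, B.IsOrthogonal σ ∧ W.map (σ : V →ₗ[K] V) = W' ∧ ∀ x : W, σ x = e x := by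
  obtain ⟨σ, hσ, hσe⟩ := exists_isOrthogonal_extending hB hW (W'.subtype ∘ₗ e.toLinearEquiv)
    fun x y ↦ e.map_app y x
  have hσW : σ.toLinearMap ∘ₗ W.subtype = W'.subtype ∘ₗ e.toLinearEquiv := LinearMap.ext hσe
  refine ⟨σ, hσ, ?_, hσe⟩
  rw [← W.range_subtype, ← LinearMap.range_comp, hσW, LinearEquiv.range_comp, W'.range_subtype]

theorem exists_isOrthogonal_map_eq_and_apply_eq [NeZero (2 : K)] (hB : B.IsSymm)
    {W W' : Submodule K V} [FiniteDimensional K W] (hW : (B.restrict W).Nondegenerate)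
    (hWW' : (B.restrict W).Equivalent (B.restrict W')) {x y : V} (hx : x ∈ W) (hy : y ∈ W')
    (hxy : B x x = B y y) (h0 : x = 0 ↔ y = 0) :
    ∃ σ : V ≃ₗ[K] V, B.IsOrthogonal σ ∧ W.map (σ : V →ₗ[K] V) = W' ∧ σ x = y := by
  obtain ⟨e⟩ := hWW'
  have hex : e (e.symm ⟨y, hy⟩) = ⟨y, hy⟩ := e.toLinearEquiv.apply_symm_apply _
  have hnorm : B.restrict W ⟨x, hx⟩ ⟨x, hx⟩ =
      B.restrict W (e.symm ⟨y, hy⟩) (e.symm ⟨y, hy⟩) := by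
    rw [e.symm.map_app]
    exact hxy
  have hzero : (⟨x, hx⟩ : W) = 0 ↔ e.symm ⟨y, hy⟩ = 0 := by
    rw [← e.symm.coe_toLinearEquiv]
    simpa using h0
  obtain ⟨g, hg, hgx, -⟩ := exists_isOrthogonal_apply_eq_of_mem (hB.restrict W) (S := ⊤)
    (by simp [orthogonal_top_eq_bot hW]) trivial trivial hnorm hzero
  let g' : (B.restrict W).IsometryEquiv (B.restrict W) := { g with map_app' := hg }
  obtain ⟨σ, hσ, hσW, hσg⟩ := exists_isOrthogonal_map_eq hB hW (g'.trans e)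
  have hgy : (g'.trans e) ⟨x, hx⟩ = ⟨y, hy⟩ := (congrArg e hgx).trans hex
  exact ⟨σ, hσ, hσW, (hσg ⟨x, hx⟩).trans (congrArg Subtype.val hgy)⟩

theorem codisjoint_orthogonal_of_finiteDimensional (hB : B.IsRefl) {W : Submodule K V}
    [FiniteDimensional K W] (hW : (B.restrict W).Nondegenerate) :
    Codisjoint W (B.orthogonal W) := by
  refine Submodule.codisjoint_iff_exists_add_eq.mpr fun v ↦ ?_
  let w : W := ((B.restrict W).toDual hW).symm ((B v).domRestrict W)
  have hw : ∀ x : W, B w x = B v x :=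
    apply_toDual_symm_apply (hB := hW) ((B v).domRestrict W)
  refine ⟨w, v - w, w.2, fun x hx ↦ hB _ _ ?_, add_sub_cancel _ _⟩
  rw [map_sub, LinearMap.sub_apply, hw ⟨x, hx⟩, sub_self]

theorem exists_isOrthogonal_map_eq_and_apply_eq_and_apply_eq [NeZero (2 : K)] (hB : B.IsSymm)
    (hnd : B.Nondegenerate) {W W' : Submodule K V} [FiniteDimensional K W]
    (hW : (B.restrict W).Nondegenerate) (hWW' : (B.restrict W).Equivalent (B.restrict W'))
    {x y u v : V} (hx : x ∈ W) (hy : y ∈ W') (hu : u ∈ B.orthogonal W) (hv : v ∈ B.orthogonal W')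
    (hxy : B x x = B y y) (hxy0 : x = 0 ↔ y = 0) (huv : B u u = B v v) (huv0 : u = 0 ↔ v = 0) :
    ∃ σ : V ≃ₗ[K] V, B.IsOrthogonal σ ∧ W.map (σ : V →ₗ[K] V) = W' ∧ σ x = y ∧ σ u = v := by
  obtain ⟨σ, hσ, rfl, rfl⟩ := exists_isOrthogonal_map_eq_and_apply_eq hB hW hWW' hx hy hxy hxy0
  have hσv : σ.symm v ∈ B.orthogonal W := fun w hw ↦ by
    rw [← hσ, σ.apply_symm_apply]
    exact hv _ (Submodule.mem_map_of_mem hw)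
  have hnorm : B u u = B (σ.symm v) (σ.symm v) := by
    rw [huv, ← hσ (σ.symm v), σ.apply_symm_apply]
  obtain ⟨τ, hτ, hτu, hτfix⟩ := exists_isOrthogonal_apply_eq_of_mem hB
    (disjoint_orthogonal_orthogonal_of_codisjoint hnd.2
      (codisjoint_orthogonal_of_finiteDimensional hB.isRefl hW)) hu hσv hnorm (by simpa using huv0)
  have hτW (w : V) (hw : w ∈ W) : τ w = w := hτfix w (le_orthogonal_orthogonal hB.isRefl hw)
  refine ⟨τ.trans σ, isOrthogonal_trans hτ hσ, ?_, by simp [hτW x hx], by simp [hτu]⟩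
  have hτσ : Set.EqOn (τ.trans σ) σ W := fun w hw ↦ congrArg σ (hτW w hw)
  exact SetLike.coe_injective hτσ.image_eq

theorem stabilizer_orbits_reg_h_isotropic_general [NeZero (2 : K)] (hB : B.IsSymm)
    (hnd : B.Nondegenerate) {W W' : Submodule K V} [FiniteDimensional K W]
    (hW : (B.restrict W).Nondegenerate) {h h' h'' : V}
    (hh' : h' ∈ W) (hsub' : h - h' ∈ B.orthogonal W)
    (hh'' : h'' ∈ W') (hsub'' : h - h'' ∈ B.orthogonal W') :
    (∃ σ : V ≃ₗ[K] V, B.IsOrthogonal σ ∧ σ h = h ∧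
        W.map (σ : V →ₗ[K] V) = W' ∧ σ h' = h'') ↔
      ((B.restrict W).Equivalent (B.restrict W') ∧ B h' h' = B h'' h'' ∧
        (h' = h ↔ h'' = h) ∧ (h' = 0 ↔ h'' = 0)) := by
  constructor
  · rintro ⟨σ, hσ, hσh, rfl, rfl⟩
    refine ⟨⟨{ σ.submoduleMap W with map_app' := fun x y ↦ hσ x y }⟩, (hσ h' h').symm, ?_,
      by simp⟩
    rw [← σ.injective.eq_iff, hσh]
  · rintro ⟨hWW', hnorm, hself, hzero⟩
    have hpyth' := apply_self_eq_add_apply_sub_self hB (hsub' h' hh')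
    have hpyth'' := apply_self_eq_add_apply_sub_self hB (hsub'' h'' hh'')
    have hnorm_sub : B (h - h') (h - h') = B (h - h'') (h - h'') := by
      linear_combination hpyth'' - hpyth' - hnorm
    obtain ⟨σ, hσ, hσW, hσh', hσsub⟩ := exists_isOrthogonal_map_eq_and_apply_eq_and_apply_eq hB
      hnd hW hWW' hh' hh'' hsub' hsub'' hnorm hzero hnorm_sub
      (by rw [sub_eq_zero, sub_eq_zero, eq_comm, hself, eq_comm])
    refine ⟨σ, hσ, ?_, hσW, hσh'⟩
    rw [← add_sub_cancel h' h, map_add, hσh', hσsub, add_sub_cancel, add_sub_cancel]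

end Field

theorem equivalent_iff_finrank_eq {K X Y : Type*} [Field K] [IsAlgClosed K] [NeZero (2 : K)]
    [AddCommGroup X] [Module K X] [FiniteDimensional K X]
    [AddCommGroup Y] [Module K Y] [FiniteDimensional K Y]
    {B : BilinForm K X} {C : BilinForm K Y} (hB : B.IsSymm) (hC : C.IsSymm)
    (hBnd : B.Nondegenerate) (hCnd : C.Nondegenerate) :
    B.Equivalent C ↔ Module.finrank K X = Module.finrank K Y := by
  refine ⟨fun ⟨e⟩ ↦ e.toLinearEquiv.finrank_eq, fun h ↦ ?_⟩
  let _ : Invertible (2 : K) := invertibleOfNonzero two_ne_zero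
  apply equivalent_of_equivalent_toQuadraticMap hB hC
  have hX := QuadraticForm.equivalent_weightedSumSquares_of_isAlgClosed B.toQuadraticMap
    (by rw [QuadraticMap.associated_left_inverse K hB.eq]; exact hBnd.1)
  have hY := QuadraticForm.equivalent_weightedSumSquares_of_isAlgClosed C.toQuadraticMap
    (by rw [QuadraticMap.associated_left_inverse K hC.eq]; exact hCnd.1)
  exact (h ▸ hX).trans hY.symm

theorem IsRegularSubspace.restrict_nondegenerate {V : Type*} [AddCommGroup V] [Module ℂ V]
    {B : BilinForm ℂ V} (hB : B.IsSymm) {W : Submodule ℂ V} (hW : IsRegularSubspace B W) :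
    (B.restrict W).Nondegenerate :=
  (hB.restrict W).isRefl.nondegenerate_iff_separatingLeft.mpr fun x hx ↦
    Subtype.ext (hW x x.2 fun y hy ↦ hx ⟨y, hy⟩)

theorem IsOrthProj.sub_mem_orthogonal {V : Type*} [AddCommGroup V] [Module ℂ V]
    {B : BilinForm ℂ V} (hB : B.IsSymm) {W : Submodule ℂ V} {x y : V} (hxy : IsOrthProj B W x y) :
    x - y ∈ B.orthogonal W :=
  fun w hw ↦ (hB.eq w (x - y)).trans (hxy.2 w hw)

/-- for `h ≠ 0` with `⟨h,h⟩ = 0`, two elements `(𝔥', h')`, `(𝔥'', h'')` of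
`Reg(𝔥)_h` lie in the same `O(𝔥)_h`-orbit iff they have the same invariant
`(dim 𝔥', ⟨h',h'⟩, [h' = h], [h' = 0])`. -/
theorem stabilizer_orbits_reg_h_isotropic
    {V : Type*} [AddCommGroup V] [Module ℂ V] [FiniteDimensional ℂ V]
    (B : LinearMap.BilinForm ℂ V)
    (hsymm : ∀ x y, B x y = B y x) (hnd : B.Nondegenerate)
    (h : V) (hh0 : h ≠ 0) (hhh : B h h = 0)
    (W W' : Submodule ℂ V)
    (hW : IsRegularSubspace B W) (hW' : IsRegularSubspace B W')
    (h' h'' : V) (hp' : IsOrthProj B W h h') (hp'' : IsOrthProj B W' h h'') :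
    (∃ σ : V ≃ₗ[ℂ] V, (∀ x y, B (σ x) (σ y) = B x y) ∧ σ h = h ∧
        W.map (σ : V →ₗ[ℂ] V) = W' ∧ σ h' = h'') ↔
      (Module.finrank ℂ W = Module.finrank ℂ W' ∧ B h' h' = B h'' h'' ∧
        (h' = h ↔ h'' = h) ∧ (h' = 0 ↔ h'' = 0)) := by
  have hB : B.IsSymm := ⟨hsymm⟩
  rw [← equivalent_iff_finrank_eq (hB.restrict W) (hB.restrict W')
    (hW.restrict_nondegenerate hB) (hW'.restrict_nondegenerate hB)]
  exact stabilizer_orbits_reg_h_isotropic_general hB hnd (hW.restrict_nondegenerate hB)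
    hp'.1 (hp'.sub_mem_orthogonal hB) hp''.1 (hp''.sub_mem_orthogonal hB)
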